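/- Every proper invariant subspace U of W intersects the sector V_0 trivially, i.e. U ∩ V_0 = {0}; and every nonzero proper invariant subspace of W contains the sector V_3. -/

import Mathlib

/-!
The even part makes each sector `V_k` an irreducible `U_q[gl(2)]`-module, and the four highest
weight vectors `v(k, m12)` have pairwise distinct weights for `(E11, E33)`. A nonzero subspace
stable under `E12` contains a nonzero vector killed by `E12` (nilpotency of `E12`); such a vector
is a combination of the four highest weight vectors, and stability under `E11`, `E33` allows one
of them to be isolated (`exists_top_mem`). Lowering by `E21` then yields a whole sector
(`sector_le_of_top_mem`), because the `q`-numbers of positive integers are positive.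

If the sector so obtained is `V_0`, then `E32` generates `V_1`, `V_2` and `V_3` in turn, so the
subspace is everything (`eq_top_of_sector_zero`). Applied to `U ⊓ V_0`, this gives the first claim.
If the sector is `V_1` or `V_2`, then `E32` maps its vector with `m11 = m13 - 1` to a nonzero
multiple of the highest weight vector of `V_3`. Hence every nonzero invariant subspace contains
`V_3`.
-/

noncomputable section

/-- The `q`-number `[x] = (q^x - q^(-x))/(q - q⁻¹)`. -/
def qn (q : ℝ) (x : ℤ) : ℝ := (q ^ x - q ^ (-x)) / (q - q⁻¹)

/-- The triple `(m12, m22, m32)` attached to the sector `k ∈ {0,1,2,3}`. -/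
def trip (m13 m23 m33 : ℤ) : Fin 4 → ℤ × ℤ × ℤ
  | 0 => (m13, m23, m33)
  | 1 => (m13, m23 - 1, m33 + 1)
  | 2 => (m13 - 1, m23, m33 + 1)
  | 3 => (m13 - 1, m23 - 1, m33 + 2)

def M12 (m13 m23 m33 : ℤ) (k : Fin 4) : ℤ := (trip m13 m23 m33 k).1
def M22 (m13 m23 m33 : ℤ) (k : Fin 4) : ℤ := (trip m13 m23 m33 k).2.1
def M32 (m13 m23 m33 : ℤ) (k : Fin 4) : ℤ := (trip m13 m23 m33 k).2.2

/-- `m11` is in the allowed range `m22 ≤ m11 ≤ m12` of the sector `k`. -/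
def InR (m13 m23 m33 : ℤ) (k : Fin 4) (x : ℤ) : Prop :=
  M22 m13 m23 m33 k ≤ x ∧ x ≤ M12 m13 m23 m33 k

instance (m13 m23 m33 : ℤ) (k : Fin 4) (x : ℤ) : Decidable (InR m13 m23 m33 k x) :=
  instDecidableAnd

/-- The index set of the basis `v(k, m11)` of `W`. -/
abbrev Idx (m13 m23 m33 : ℤ) : Type :=
  {p : Fin 4 × ℤ // InR m13 m23 m33 p.1 p.2}

/-- The module `W = W^q([m13,m23,m33])`, realized as the free complex vector
space on the basis `v(k, m11)`, `k ∈ {0,1,2,3}`, `m22 ≤ m11 ≤ m12`. -/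
abbrev Wsp (m13 m23 m33 : ℤ) : Type := Idx m13 m23 m33 →₀ ℂ

/-- The basis vector `v(k, m11)` (zero if `m11` is out of range). -/
def bv (m13 m23 m33 : ℤ) (k : Fin 4) (x : ℤ) : Wsp m13 m23 m33 :=
  if h : InR m13 m23 m33 k x then Finsupp.single ⟨(k, x), h⟩ 1 else 0

/-- The sector `V_k`, the span of the `v(k, ·)`. -/
def Vk (m13 m23 m33 : ℤ) (k : Fin 4) : Submodule ℂ (Wsp m13 m23 m33) :=
  Submodule.span ℂ (Set.range (bv m13 m23 m33 k))

/-- The Gel'fand--Zetlin realization of the induced `U_q[gl(2/1)]`-module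
`W^q([m13,m23,m33])`: seven linear operators acting on the basis `v(k, m11)`
by the stated formulas (terms with `m11` out of range being `0`). -/
structure GZ (q : ℝ) (m13 m23 m33 : ℤ) where
  E11 : Wsp m13 m23 m33 →ₗ[ℂ] Wsp m13 m23 m33
  E22 : Wsp m13 m23 m33 →ₗ[ℂ] Wsp m13 m23 m33
  E33 : Wsp m13 m23 m33 →ₗ[ℂ] Wsp m13 m23 m33
  E12 : Wsp m13 m23 m33 →ₗ[ℂ] Wsp m13 m23 m33
  E21 : Wsp m13 m23 m33 →ₗ[ℂ] Wsp m13 m23 m33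
  E23 : Wsp m13 m23 m33 →ₗ[ℂ] Wsp m13 m23 m33
  E32 : Wsp m13 m23 m33 →ₗ[ℂ] Wsp m13 m23 m33
  hE11 : ∀ (k : Fin 4) (x : ℤ), InR m13 m23 m33 k x →
    E11 (bv m13 m23 m33 k x) = (x : ℂ) • bv m13 m23 m33 k x
  hE22 : ∀ (k : Fin 4) (x : ℤ), InR m13 m23 m33 k x →
    E22 (bv m13 m23 m33 k x) =
      ((M12 m13 m23 m33 k + M22 m13 m23 m33 k - x : ℤ) : ℂ) • bv m13 m23 m33 k x
  hE33 : ∀ (k : Fin 4) (x : ℤ), InR m13 m23 m33 k x →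
    E33 (bv m13 m23 m33 k x) = ((M32 m13 m23 m33 k : ℤ) : ℂ) • bv m13 m23 m33 k x
  hE12 : ∀ (k : Fin 4) (x : ℤ), InR m13 m23 m33 k x →
    E12 (bv m13 m23 m33 k x) =
      ((Real.sqrt (qn q (M12 m13 m23 m33 k - x) * qn q (x - M22 m13 m23 m33 k + 1)) : ℝ) : ℂ) •
        bv m13 m23 m33 k (x + 1)
  hE21 : ∀ (k : Fin 4) (x : ℤ), InR m13 m23 m33 k x →
    E21 (bv m13 m23 m33 k x) =
      ((Real.sqrt (qn q (M12 m13 m23 m33 k - x + 1) * qn q (x - M22 m13 m23 m33 k)) : ℝ) : ℂ) •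
        bv m13 m23 m33 k (x - 1)
  hE23₀ : ∀ x : ℤ, InR m13 m23 m33 0 x → E23 (bv m13 m23 m33 0 x) = 0
  hE23₁ : ∀ x : ℤ, InR m13 m23 m33 1 x →
    E23 (bv m13 m23 m33 1 x) =
      ((Real.sqrt (qn q (x - m23 + 1) / qn q (m13 - m23 + 1)) * qn q (m23 + m33) : ℝ) : ℂ) •
        bv m13 m23 m33 0 x
  hE23₂ : ∀ x : ℤ, InR m13 m23 m33 2 x →
    E23 (bv m13 m23 m33 2 x) =
      ((Real.sqrt (qn q (m13 - x) / qn q (m13 - m23)) * qn q (m13 + m33 + 1) : ℝ) : ℂ) •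
        bv m13 m23 m33 0 x
  hE23₃ : ∀ x : ℤ, InR m13 m23 m33 3 x →
    E23 (bv m13 m23 m33 3 x) =
      ((q⁻¹ * Real.sqrt (qn q (m13 - x) / qn q (m13 - m23 + 1)) * qn q (m13 + m33 + 1) : ℝ) : ℂ) •
          bv m13 m23 m33 1 x
        - ((q⁻¹ * Real.sqrt (qn q (x - m23 + 1) * qn q (m13 - m23)) *
            (qn q (m23 + m33) / qn q (m13 - m23 + 1)) : ℝ) : ℂ) • bv m13 m23 m33 2 x
  hE32₀ : ∀ x : ℤ, InR m13 m23 m33 0 x →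
    E32 (bv m13 m23 m33 0 x) =
      ((Real.sqrt (qn q (x - m23 + 1) / qn q (m13 - m23 + 1)) : ℝ) : ℂ) • bv m13 m23 m33 1 x
        + ((Real.sqrt (qn q (m13 - x) * qn q (m13 - m23)) / qn q (m13 - m23 + 1) : ℝ) : ℂ) •
            bv m13 m23 m33 2 x
  hE32₁ : ∀ x : ℤ, InR m13 m23 m33 1 x →
    E32 (bv m13 m23 m33 1 x) =
      ((q * Real.sqrt (qn q (m13 - x) / qn q (m13 - m23 + 1)) : ℝ) : ℂ) • bv m13 m23 m33 3 x
  hE32₂ : ∀ x : ℤ, InR m13 m23 m33 2 x →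
    E32 (bv m13 m23 m33 2 x) =
      -(((q * Real.sqrt (qn q (x - m23 + 1) / qn q (m13 - m23)) : ℝ) : ℂ) • bv m13 m23 m33 3 x)
  hE32₃ : ∀ x : ℤ, InR m13 m23 m33 3 x → E32 (bv m13 m23 m33 3 x) = 0

/-- A subspace `U` of `W` is invariant if it is stable under all seven
operators `E11, E22, E33, E12, E21, E23, E32`. -/
def Invariant (q : ℝ) (m13 m23 m33 : ℤ) (R : GZ q m13 m23 m33)
    (U : Submodule ℂ (Wsp m13 m23 m33)) : Prop :=
  ∀ E ∈ ({R.E11, R.E22, R.E33, R.E12, R.E21, R.E23, R.E32} :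
      Set (Wsp m13 m23 m33 →ₗ[ℂ] Wsp m13 m23 m33)),
    ∀ x ∈ U, E x ∈ U

/-! ### Coordinates and `q`-numbers -/

lemma qn_pos {q : ℝ} (hq : 0 < q) (hq1 : q ≠ 1) {x : ℤ} (hx : 0 < x) : 0 < qn q x := by
  unfold qn
  have e : q⁻¹ = q ^ (-1 : ℤ) := by simp
  have e1 : q = q ^ (1 : ℤ) := by simp
  rcases lt_or_gt_of_ne hq1 with h | h
  · apply div_pos_of_neg_of_neg
    · have := zpow_lt_zpow_right_of_lt_one₀ hq h (show -x < x by omega)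
      linarith
    · have := zpow_lt_zpow_right_of_lt_one₀ hq h (show (-1 : ℤ) < 1 by omega)
      rw [← e, ← e1] at this
      linarith
  · apply div_pos
    · have := zpow_lt_zpow_right₀ h (show -x < x by omega)
      linarith
    · have := zpow_lt_zpow_right₀ h (show (-1 : ℤ) < 1 by omega)
      rw [← e, ← e1] at this
      linarith

section
variable {q : ℝ} {m13 m23 m33 : ℤ}

lemma bv_apply (k : Fin 4) (x : ℤ) (p : Idx m13 m23 m33) :
    bv m13 m23 m33 k x p = if p.1 = (k, x) then 1 else 0 := by
  unfold bv
  split_ifs with h h' h'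
  · rw [Finsupp.single_apply, if_pos (Subtype.ext h'.symm)]
  · rw [Finsupp.single_apply, if_neg (fun e => h' (congrArg Subtype.val e).symm)]
  · exact absurd (by simpa [h'] using p.2) h
  · rfl

lemma bv_of_not {k : Fin 4} {x : ℤ} (h : ¬ InR m13 m23 m33 k x) : bv m13 m23 m33 k x = 0 :=
  dif_neg h

lemma single_eq (p : Idx m13 m23 m33) (c : ℂ) :
    (Finsupp.single p c : Wsp m13 m23 m33) = c • bv m13 m23 m33 p.1.1 p.1.2 := by
  have : bv m13 m23 m33 p.1.1 p.1.2 = Finsupp.single p 1 := dif_pos p.2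
  rw [this]; simp

/-- An operator that is diagonal on the basis acts diagonally on coordinates. -/
lemma diag_apply (E : Wsp m13 m23 m33 →ₗ[ℂ] Wsp m13 m23 m33) (f : Fin 4 → ℤ → ℂ)
    (hE : ∀ k x, InR m13 m23 m33 k x → E (bv m13 m23 m33 k x) = f k x • bv m13 m23 m33 k x)
    (u : Wsp m13 m23 m33) (p : Idx m13 m23 m33) : E u p = f p.1.1 p.1.2 * u p := by
  induction u using Finsupp.induction_linear with
  | zero => simp
  | add u v hu hv => simp [hu, hv, mul_add]
  | single a c =>
    rw [single_eq, map_smul, hE _ _ a.2]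
    simp only [Finsupp.smul_apply, bv_apply, smul_eq_mul]
    split_ifs with h
    · simp [h]; ring
    · simp

/-- An operator raising `m11` by one shifts coordinates accordingly. -/
lemma shift_apply (E : Wsp m13 m23 m33 →ₗ[ℂ] Wsp m13 m23 m33) (f : Fin 4 → ℤ → ℂ)
    (hE : ∀ k x, InR m13 m23 m33 k x →
      E (bv m13 m23 m33 k x) = f k x • bv m13 m23 m33 k (x + 1))
    (u : Wsp m13 m23 m33) (p p' : Idx m13 m23 m33) (hp : p'.1 = (p.1.1, p.1.2 + 1)) :
    E u p' = f p.1.1 p.1.2 * u p := by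
  induction u using Finsupp.induction_linear with
  | zero => simp
  | add u v hu hv => simp [hu, hv, mul_add]
  | single a c =>
    rw [single_eq, map_smul, hE _ _ a.2]
    simp only [Finsupp.smul_apply, bv_apply, smul_eq_mul, hp]
    by_cases h : p.1 = (a.1.1, a.1.2)
    · simp [h]; ring
    · have h' : ¬ ((p.1.1, p.1.2 + 1) = (a.1.1, a.1.2 + 1)) := by
        intro e
        apply h
        simp only [Prod.mk.injEq, add_left_inj] at e
        exact Prod.ext e.1 e.2
      simp [h, h']

lemma shift_pow (E : Wsp m13 m23 m33 →ₗ[ℂ] Wsp m13 m23 m33) (f : Fin 4 → ℤ → ℂ)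
    (hE : ∀ k x, InR m13 m23 m33 k x →
      E (bv m13 m23 m33 k x) = f k x • bv m13 m23 m33 k (x + 1))
    (k : Fin 4) (x : ℤ) (j : ℕ) :
    ∃ c : ℂ, (E ^ j) (bv m13 m23 m33 k x) = c • bv m13 m23 m33 k (x + j) := by
  induction j with
  | zero => exact ⟨1, by simp⟩
  | succ j ih =>
    obtain ⟨c, hc⟩ := ih
    rw [pow_succ', Module.End.mul_apply, hc, map_smul]
    by_cases h : InR m13 m23 m33 k (x + j)
    · refine ⟨c * f k (x + j), ?_⟩
      rw [hE _ _ h, smul_smul]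
      push_cast
      rw [add_assoc]
    · refine ⟨0, ?_⟩
      simp [bv_of_not h]

lemma range_bounds {k : Fin 4} {x : ℤ} (h : InR m13 m23 m33 k x) :
    m23 - 1 ≤ x ∧ x ≤ m13 := by
  unfold InR M12 M22 at h
  fin_cases k <;> simp [trip] at h <;> omega

lemma shift_nilp (E : Wsp m13 m23 m33 →ₗ[ℂ] Wsp m13 m23 m33) (f : Fin 4 → ℤ → ℂ)
    (hE : ∀ k x, InR m13 m23 m33 k x →
      E (bv m13 m23 m33 k x) = f k x • bv m13 m23 m33 k (x + 1))
    (u : Wsp m13 m23 m33) : (E ^ (m13 - m23 + 2).toNat) u = 0 := by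
  induction u using Finsupp.induction_linear with
  | zero => simp
  | add u v hu hv => simp [hu, hv]
  | single a c =>
    obtain ⟨d, hd⟩ := shift_pow E f hE a.1.1 a.1.2 (m13 - m23 + 2).toNat
    have hn : ¬ InR m13 m23 m33 a.1.1 (a.1.2 + ((m13 - m23 + 2).toNat : ℤ)) := by
      intro h
      have h1 := range_bounds h
      have h2 := range_bounds a.2
      omega
    rw [single_eq, map_smul, hd, bv_of_not hn]; simp

/-! ### Highest weight vectors and sectors -/

/-- A nonzero subspace stable under `E11`, `E33`, `E12` contains the highest weight vector
`v(k, m12)` of some nonempty sector. -/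
lemma exists_top_mem (hq : 0 < q) (hq1 : q ≠ 1) (R : GZ q m13 m23 m33)
    (U : Submodule ℂ (Wsp m13 m23 m33)) (hU : U ≠ ⊥)
    (h11 : ∀ u ∈ U, R.E11 u ∈ U) (h33 : ∀ u ∈ U, R.E33 u ∈ U) (h12 : ∀ u ∈ U, R.E12 u ∈ U) :
    ∃ k, InR m13 m23 m33 k (M12 m13 m23 m33 k) ∧
      bv m13 m23 m33 k (M12 m13 m23 m33 k) ∈ U := by
  obtain ⟨u₀, hu₀, hne⟩ := U.ne_bot_iff.mp hU
  have hpow : ∀ j : ℕ, (R.E12 ^ j) u₀ ∈ U := by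
    intro j
    induction j with
    | zero => simpa using hu₀
    | succ j ih => rw [pow_succ', Module.End.mul_apply]; exact h12 _ ih
  classical
  have hex : ∃ j : ℕ, (R.E12 ^ j) u₀ = 0 := ⟨_, shift_nilp R.E12 _ R.hE12 u₀⟩
  -- the last nonzero iterate of `E12` on `u₀` is killed by `E12`
  obtain ⟨u, huU, hu0, hu⟩ : ∃ u ∈ U, u ≠ 0 ∧ R.E12 u = 0 := by
    have hs := Nat.find_spec hex
    have hmin := fun m => Nat.find_min hex (m := m)
    generalize Nat.find hex = n at hs hmin
    obtain _ | j := n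
    · exact absurd (by simpa using hs) hne
    · refine ⟨_, hpow j, hmin j (Nat.lt_succ_self j), ?_⟩
      rwa [pow_succ', Module.End.mul_apply] at hs
  have hsupp : ∀ p : Idx m13 m23 m33, u p ≠ 0 → p.1.2 = M12 m13 m23 m33 p.1.1 := by
    intro p hp
    by_contra hlt
    have hr := p.2
    unfold InR at hr
    have hr' : InR m13 m23 m33 p.1.1 (p.1.2 + 1) := ⟨by omega, by omega⟩
    have := shift_apply R.E12 _ R.hE12 u p ⟨(p.1.1, p.1.2 + 1), hr'⟩ rfl
    rw [hu] at this
    have hs : 0 < Real.sqrt (qn q (M12 m13 m23 m33 p.1.1 - p.1.2) *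
        qn q (p.1.2 - M22 m13 m23 m33 p.1.1 + 1)) :=
      Real.sqrt_pos.mpr (mul_pos (qn_pos hq hq1 (by omega)) (qn_pos hq hq1 (by omega)))
    have h2 := mul_eq_zero.mp this.symm
    rcases h2 with h2 | h2
    · exact hs.ne' (by exact_mod_cast h2)
    · exact hp h2
  obtain ⟨p, hp⟩ : ∃ p, u p ≠ 0 := by
    by_contra! h
    exact hu0 (Finsupp.ext h)
  have htop := hsupp p hp
  have hdiag : ∀ (a b : ℂ) (p' : Idx m13 m23 m33),
      ((R.E11 (R.E33 u - b • u)) - a • (R.E33 u - b • u)) p' =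
        ((p'.1.2 : ℂ) - a) * ((M32 m13 m23 m33 p'.1.1 : ℂ) - b) * u p' := by
    intro a b p'
    have e1 := fun v => diag_apply R.E11 (fun _ x => (x : ℂ)) R.hE11 v p'
    have e3 := fun v => diag_apply R.E33 (fun k _ => (M32 m13 m23 m33 k : ℂ)) R.hE33 v p'
    simp only [Finsupp.sub_apply, Finsupp.smul_apply, e1, e3, smul_eq_mul]
    ring
  have hmem : ∀ a b : ℂ, ((R.E11 (R.E33 u - b • u)) - a • (R.E33 u - b • u)) ∈ U := by
    intro a b
    have h : R.E33 u - b • u ∈ U := U.sub_mem (h33 u huU) (U.smul_mem _ huU)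
    exact U.sub_mem (h11 _ h) (U.smul_mem _ h)
  -- integers `a`, `b` such that `(E11 - a)(E33 - b)` annihilates the highest weight vectors of
  -- all sectors but that of `p`
  obtain ⟨a, b, ha, hb, hab⟩ : ∃ a b : ℤ, M12 m13 m23 m33 p.1.1 - a ≠ 0 ∧
      M32 m13 m23 m33 p.1.1 - b ≠ 0 ∧
      ∀ k, k ≠ p.1.1 → M12 m13 m23 m33 k - a = 0 ∨ M32 m13 m23 m33 k - b = 0 := by
    generalize p.1.1 = k
    fin_cases k
    · refine ⟨m13 - 1, m33 + 1, ?_, ?_, ?_⟩ <;> simp [M12, M32, trip]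
      intro k hk; fin_cases k <;> simp_all
    · refine ⟨m13 - 1, m33, ?_, ?_, ?_⟩ <;> simp [M12, M32, trip]
      intro k hk; fin_cases k <;> simp_all
    · refine ⟨m13, m33 + 2, ?_, ?_, ?_⟩ <;> simp [M12, M32, trip]
      intro k hk; fin_cases k <;> simp_all
    · refine ⟨m13, m33 + 1, ?_, ?_, ?_⟩ <;> simp [M12, M32, trip]
      intro k hk; fin_cases k <;> simp_all
  set c : ℂ := ((p.1.2 : ℂ) - a) * ((M32 m13 m23 m33 p.1.1 : ℂ) - b) * u p with hc
  have hc0 : c ≠ 0 := by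
    refine mul_ne_zero (mul_ne_zero ?_ ?_) hp
    · rw [htop]; exact_mod_cast ha
    · exact_mod_cast hb
  have heq : ((R.E11 (R.E33 u - (b : ℂ) • u)) - (a : ℂ) • (R.E33 u - (b : ℂ) • u)) =
      c • bv m13 m23 m33 p.1.1 (M12 m13 m23 m33 p.1.1) := by
    ext p'
    rw [hdiag, Finsupp.smul_apply, bv_apply, smul_eq_mul]
    by_cases h0 : u p' = 0
    · split_ifs with h
      · rw [← htop] at h
        exact absurd ((Subtype.ext h : p' = p) ▸ h0) hp
      · simp [h0]
    · have ht' := hsupp p' h0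
      by_cases hk : p'.1.1 = p.1.1
      · have : p' = p := Subtype.ext (Prod.ext hk (by rw [ht', htop, hk]))
        subst this
        have e : p'.1 = (p'.1.1, M12 m13 m23 m33 p'.1.1) := Prod.ext rfl htop
        rw [if_pos e, hc, mul_one]
      · have e : p'.1 ≠ (p.1.1, M12 m13 m23 m33 p.1.1) :=
          fun e => hk (by rw [e])
        rw [if_neg e]
        rcases hab _ hk with h | h
        · have : ((p'.1.2 : ℂ) - a) = 0 := by rw [ht']; exact_mod_cast h
          simp [this]
        · have : ((M32 m13 m23 m33 p'.1.1 : ℂ) - b) = 0 := by exact_mod_cast h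
          simp [this]
  refine ⟨p.1.1, htop ▸ p.2, ?_⟩
  exact (U.smul_mem_iff hc0).mp (heq ▸ hmem a b)

/-- A subspace stable under `E21` that contains a highest weight vector contains its sector. -/
lemma sector_le_of_top_mem (hq : 0 < q) (hq1 : q ≠ 1) (R : GZ q m13 m23 m33)
    (U : Submodule ℂ (Wsp m13 m23 m33)) (h21 : ∀ u ∈ U, R.E21 u ∈ U) (k : Fin 4)
    (hk : bv m13 m23 m33 k (M12 m13 m23 m33 k) ∈ U) (x : ℤ) : bv m13 m23 m33 k x ∈ U := by
  have key : ∀ j : ℕ, bv m13 m23 m33 k (M12 m13 m23 m33 k - j) ∈ U := by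
    intro j
    induction j with
    | zero => simpa using hk
    | succ j ih =>
      by_cases h : InR m13 m23 m33 k (M12 m13 m23 m33 k - (j + 1 : ℕ))
      · have h' : InR m13 m23 m33 k (M12 m13 m23 m33 k - j) := by
          unfold InR at h ⊢; push_cast at h; omega
        have := h21 _ ih
        rw [R.hE21 _ _ h'] at this
        have hs : 0 < Real.sqrt (qn q (M12 m13 m23 m33 k - (M12 m13 m23 m33 k - j) + 1) *
            qn q (M12 m13 m23 m33 k - j - M22 m13 m23 m33 k)) := by
          unfold InR at h; push_cast at h
          exact Real.sqrt_pos.mpr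
            (mul_pos (qn_pos hq hq1 (by omega)) (qn_pos hq hq1 (by omega)))
        rw [U.smul_mem_iff (by exact_mod_cast hs.ne')] at this
        push_cast
        rwa [← sub_sub]
      · rw [bv_of_not h]; exact U.zero_mem
  by_cases h : InR m13 m23 m33 k x
  · have := key (M12 m13 m23 m33 k - x).toNat
    have e : M12 m13 m23 m33 k - ((M12 m13 m23 m33 k - x).toNat : ℤ) = x := by
      have := h.2; omega
    rwa [e] at this
  · rw [bv_of_not h]; exact U.zero_mem

/-! ### Passing between sectors with `E32` -/

lemma inR_zero {x : ℤ} : InR m13 m23 m33 0 x ↔ m23 ≤ x ∧ x ≤ m13 := Iff.rfl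
lemma inR_one {x : ℤ} : InR m13 m23 m33 1 x ↔ m23 - 1 ≤ x ∧ x ≤ m13 := Iff.rfl
lemma inR_two {x : ℤ} : InR m13 m23 m33 2 x ↔ m23 ≤ x ∧ x ≤ m13 - 1 := Iff.rfl
lemma inR_three {x : ℤ} : InR m13 m23 m33 3 x ↔ m23 - 1 ≤ x ∧ x ≤ m13 - 1 := Iff.rfl

lemma three_of_one (hq : 0 < q) (hq1 : q ≠ 1) (hm : m23 ≤ m13) (R : GZ q m13 m23 m33)
    (U : Submodule ℂ (Wsp m13 m23 m33)) (h32 : ∀ u ∈ U, R.E32 u ∈ U)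
    (h1 : ∀ x, bv m13 m23 m33 1 x ∈ U) (x : ℤ) : bv m13 m23 m33 3 x ∈ U := by
  by_cases h : InR m13 m23 m33 3 x
  · rw [inR_three] at h
    have := h32 _ (h1 x)
    rw [R.hE32₁ x (inR_one.mpr (by omega))] at this
    have hs : 0 < q * Real.sqrt (qn q (m13 - x) / qn q (m13 - m23 + 1)) :=
      mul_pos hq (Real.sqrt_pos.mpr
        (div_pos (qn_pos hq hq1 (by omega)) (qn_pos hq hq1 (by omega))))
    rwa [U.smul_mem_iff (by exact_mod_cast hs.ne')] at this
  · rw [bv_of_not h]; exact U.zero_mem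

/-- A subspace stable under `E21` and `E32` that contains the highest weight vector of `V_0` is
everything: `E32 v(0, m13) = v(1, m13)` gives `V_1`, then `E32 v(0, x)` gives `V_2` modulo `V_1`,
and `V_3` comes from `V_1`. -/
lemma eq_top_of_sector_zero (hq : 0 < q) (hq1 : q ≠ 1) (hm : m23 ≤ m13)
    (R : GZ q m13 m23 m33) (U : Submodule ℂ (Wsp m13 m23 m33))
    (h21 : ∀ u ∈ U, R.E21 u ∈ U) (h32 : ∀ u ∈ U, R.E32 u ∈ U)
    (htop : bv m13 m23 m33 0 (M12 m13 m23 m33 0) ∈ U) : U = ⊤ := by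
  have h0 := sector_le_of_top_mem hq hq1 R U h21 0 htop
  have h1 : ∀ x, bv m13 m23 m33 1 x ∈ U := by
    refine sector_le_of_top_mem hq hq1 R U h21 1 ?_
    have := h32 _ (h0 m13)
    rw [R.hE32₀ m13 (inR_zero.mpr (by omega)),
      bv_of_not (k := 2) (x := m13) (by rw [inR_two]; omega), smul_zero, add_zero] at this
    have hs : 0 < Real.sqrt (qn q (m13 - m23 + 1) / qn q (m13 - m23 + 1)) :=
      Real.sqrt_pos.mpr (div_pos (qn_pos hq hq1 (by omega)) (qn_pos hq hq1 (by omega)))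
    rwa [U.smul_mem_iff (by exact_mod_cast hs.ne')] at this
  have h2 : ∀ x, bv m13 m23 m33 2 x ∈ U := by
    intro x
    by_cases h : InR m13 m23 m33 2 x
    · rw [inR_two] at h
      have := h32 _ (h0 x)
      rw [R.hE32₀ x (inR_zero.mpr (by omega)),
        U.add_mem_iff_right (U.smul_mem _ (h1 x))] at this
      have hs : 0 < Real.sqrt (qn q (m13 - x) * qn q (m13 - m23)) / qn q (m13 - m23 + 1) :=
        div_pos (Real.sqrt_pos.mpr
          (mul_pos (qn_pos hq hq1 (by omega)) (qn_pos hq hq1 (by omega))))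
          (qn_pos hq hq1 (by omega))
      rwa [U.smul_mem_iff (by exact_mod_cast hs.ne')] at this
    · rw [bv_of_not h]; exact U.zero_mem
  have h3 := three_of_one hq hq1 hm R U h32 h1
  have hall : ∀ k x, bv m13 m23 m33 k x ∈ U := by
    intro k
    fin_cases k
    exacts [h0, h1, h2, h3]
  refine eq_top_iff.mpr fun u _ => ?_
  induction u using Finsupp.induction_linear with
  | zero => exact U.zero_mem
  | add u v hu hv => exact U.add_mem (hu trivial) (hv trivial)
  | single a c => rw [single_eq]; exact U.smul_mem _ (hall _ _)

lemma Vk_stable (E : Wsp m13 m23 m33 →ₗ[ℂ] Wsp m13 m23 m33) (k : Fin 4)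
    (hE : ∀ x, InR m13 m23 m33 k x → E (bv m13 m23 m33 k x) ∈ Vk m13 m23 m33 k)
    (u : Wsp m13 m23 m33) (hu : u ∈ Vk m13 m23 m33 k) : E u ∈ Vk m13 m23 m33 k := by
  have : Vk m13 m23 m33 k ≤ (Vk m13 m23 m33 k).comap E := by
    refine Submodule.span_le.mpr ?_
    rintro _ ⟨x, rfl⟩
    by_cases h : InR m13 m23 m33 k x
    · exact hE x h
    · rw [bv_of_not h]; exact Submodule.zero_mem _
  exact this hu

lemma bv_mem_Vk (k : Fin 4) (x : ℤ) : bv m13 m23 m33 k x ∈ Vk m13 m23 m33 k :=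
  Submodule.subset_span ⟨x, rfl⟩

lemma Vk_apply_of_ne (k : Fin 4) (u : Wsp m13 m23 m33) (hu : u ∈ Vk m13 m23 m33 k)
    (p : Idx m13 m23 m33) (hp : p.1.1 ≠ k) : u p = 0 := by
  have : Vk m13 m23 m33 k ≤ LinearMap.ker (Finsupp.lapply (R := ℂ) (M := ℂ) p) := by
    refine Submodule.span_le.mpr ?_
    rintro _ ⟨x, rfl⟩
    simp only [SetLike.mem_coe, LinearMap.mem_ker, Finsupp.lapply_apply, bv_apply]
    exact if_neg fun e => hp (congrArg Prod.fst e)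
  exact this hu

end

/-- Every proper invariant subspace `U` of `W` intersects the
sector `V_0` trivially, i.e. `U ⊓ V_0 = {0}`; and every nonzero proper
invariant subspace of `W` contains the sector `V_3`. -/
theorem stmt_12 (q : ℝ) (hq : 0 < q) (hq1 : q ≠ 1)
    (m13 m23 m33 : ℤ) (hm : m23 ≤ m13) (R : GZ q m13 m23 m33) :
    (∀ U : Submodule ℂ (Wsp m13 m23 m33), Invariant q m13 m23 m33 R U → U ≠ ⊤ →
      U ⊓ Vk m13 m23 m33 0 = ⊥) ∧
    (∀ U : Submodule ℂ (Wsp m13 m23 m33), Invariant q m13 m23 m33 R U → U ≠ ⊤ → U ≠ ⊥ →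
      Vk m13 m23 m33 3 ≤ U) := by
  have h1 : ∀ U : Submodule ℂ (Wsp m13 m23 m33), Invariant q m13 m23 m33 R U → U ≠ ⊤ →
      U ⊓ Vk m13 m23 m33 0 = ⊥ := by
    intro U hU hne
    by_contra hbot
    obtain ⟨k, hr, hk⟩ := exists_top_mem hq hq1 R (U ⊓ Vk m13 m23 m33 0) hbot
      (fun u hu => ⟨hU _ (by simp) u hu.1, Vk_stable _ 0 (fun x h => by
        rw [R.hE11 0 x h]; exact Submodule.smul_mem _ _ (bv_mem_Vk _ _)) u hu.2⟩)
      (fun u hu => ⟨hU _ (by simp) u hu.1, Vk_stable _ 0 (fun x h => by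
        rw [R.hE33 0 x h]; exact Submodule.smul_mem _ _ (bv_mem_Vk _ _)) u hu.2⟩)
      (fun u hu => ⟨hU _ (by simp) u hu.1, Vk_stable _ 0 (fun x h => by
        rw [R.hE12 0 x h]; exact Submodule.smul_mem _ _ (bv_mem_Vk _ _)) u hu.2⟩)
    have hk0 : k = 0 := by
      by_contra hk0
      have := Vk_apply_of_ne 0 _ hk.2 ⟨(k, M12 m13 m23 m33 k), hr⟩ hk0
      simp [bv_apply] at this
    subst hk0
    exact hne (eq_top_of_sector_zero hq hq1 hm R U (hU _ (by simp)) (hU _ (by simp)) hk.1)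
  refine ⟨h1, fun U hU hne hbot => ?_⟩
  have h21 := hU R.E21 (by simp)
  have h32 := hU R.E32 (by simp)
  obtain ⟨k, hr, hk⟩ := exists_top_mem hq hq1 R U hbot (hU _ (by simp)) (hU _ (by simp))
    (hU _ (by simp))
  have hall := sector_le_of_top_mem hq hq1 R U h21 k hk
  refine Submodule.span_le.mpr ?_
  rintro _ ⟨x, rfl⟩
  rw [SetLike.mem_coe]
  fin_cases k
  · exact absurd (eq_top_of_sector_zero hq hq1 hm R U h21 h32 hk) hne
  · exact three_of_one hq hq1 hm R U h32 hall x
  · refine sector_le_of_top_mem hq hq1 R U h21 3 ?_ x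
    -- nonemptiness of the sector `V_2` forces `m23 < m13`
    have hlt : m23 ≤ m13 - 1 := (inR_two.mp hr).1
    have := h32 _ (hall (m13 - 1))
    simp only [Fin.reduceFinMk] at this
    rw [R.hE32₂ _ (inR_two.mpr ⟨hlt, le_rfl⟩), U.neg_mem_iff] at this
    have hs : 0 < q * Real.sqrt (qn q (m13 - 1 - m23 + 1) / qn q (m13 - m23)) :=
      mul_pos hq (Real.sqrt_pos.mpr
        (div_pos (qn_pos hq hq1 (by omega)) (qn_pos hq hq1 (by omega))))
    rwa [U.smul_mem_iff (by exact_mod_cast hs.ne')] at this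
  · exact hall x
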